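/- arXiv:2308.14467 — 6 statements merged into one kernel-verified Lean document; each statement's English description precedes it below -/
import Mathlib

section
/- Let λ be a singular cardinal. Then (cf(λ))⁺ is not a λ-revision cardinal; that is, for every cardinal σ < (cf(λ))⁺ we have cov(λ, (cf(λ))⁺, (cf(λ))⁺, σ) > λ. -/
open Cardinal Set

universe u

/-- `X ⊆ 𝒫_{ρ₂}(ρ₁)` is a family witnessing the covering number `cov (ρ₁, ρ₂, ρ₃, ρ₄)`:
every `b ∈ 𝒫_{ρ₃}(ρ₁)` is covered by the union of fewer than `ρ₄` members of `X`. -/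
def IsCovFamily (ρ₁ ρ₂ ρ₃ ρ₄ : Cardinal.{u}) (X : Set (Set ρ₁.out)) : Prop :=
  (∀ x ∈ X, #x < ρ₂) ∧
    ∀ b : Set ρ₁.out, #b < ρ₃ →
      ∃ Q : Set (Set ρ₁.out), Q ⊆ X ∧ #Q < ρ₄ ∧ b ⊆ ⋃₀ Q

open scoped Classical in
/-- The covering number `cov (ρ₁, ρ₂, ρ₃, ρ₄)`: the least cardinality of a set
`X ⊆ 𝒫_{ρ₂}(ρ₁)` such that every `b ∈ 𝒫_{ρ₃}(ρ₁)` is included in the union of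
fewer than `ρ₄` members of `X` (with value `2 ^ ρ₁` if no such family exists). -/
noncomputable def cov (ρ₁ ρ₂ ρ₃ ρ₄ : Cardinal.{u}) : Cardinal.{u} :=
  if ∃ X, IsCovFamily ρ₁ ρ₂ ρ₃ ρ₄ X then
    sInf {κ | ∃ X, IsCovFamily ρ₁ ρ₂ ρ₃ ρ₄ X ∧ #X = κ}
  else 2 ^ ρ₁

/-- `χ` is a `λ`-revision cardinal: `cov (λ, χ, χ, σ) ≤ λ` for some cardinal `σ < χ`. -/
def IsRevision (χ lam : Cardinal.{u}) : Prop :=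
  ∃ σ < χ, cov lam χ χ σ ≤ lam

/-- `c` is a limit cardinal: infinite and not the successor of any cardinal. -/
def IsLimitCard (c : Cardinal.{u}) : Prop :=
  ℵ₀ ≤ c ∧ ∀ μ : Cardinal.{u}, c ≠ Order.succ μ

/-- `Z ⊆ 𝒫_τ(λ)` is a family witnessing `equal (λ, τ, ρ, σ)`: every `b ∈ [λ]^ρ` is
the union of fewer than `σ` members of `Z`. -/
def IsEqualFamily (lam tau rho sigma : Cardinal.{u}) (Z : Set (Set lam.out)) : Prop :=
  (∀ z ∈ Z, #z < tau) ∧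
    ∀ b : Set lam.out, #b = rho →
      ∃ e : Set (Set lam.out), e ⊆ Z ∧ #e < sigma ∧ b = ⋃₀ e

open scoped Classical in
/-- `equal (λ, τ, ρ, σ)`: the least cardinality of a set `Z ⊆ 𝒫_τ(λ)` such that every
`b ∈ [λ]^ρ` is the union of fewer than `σ` members of `Z`; `2 ^ λ` if no such `Z` exists. -/
noncomputable def equalCov (lam tau rho sigma : Cardinal.{u}) : Cardinal.{u} :=
  if ∃ Z, IsEqualFamily lam tau rho sigma Z then
    sInf {κ | ∃ Z, IsEqualFamily lam tau rho sigma Z ∧ #Z = κ}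
  else 2 ^ lam

/-- `Z ⊆ 𝒫_τ(λ)` is a family witnessing `equal (λ, τ, <ρ, σ)`: every `b ∈ 𝒫_ρ(λ)` is
the union of fewer than `σ` members of `Z`. -/
def IsEqualLtFamily (lam tau rho sigma : Cardinal.{u}) (Z : Set (Set lam.out)) : Prop :=
  (∀ z ∈ Z, #z < tau) ∧
    ∀ b : Set lam.out, #b < rho →
      ∃ e : Set (Set lam.out), e ⊆ Z ∧ #e < sigma ∧ b = ⋃₀ e

open scoped Classical in
/-- `equal (λ, τ, <ρ, σ)`: the least cardinality of a set `Z ⊆ 𝒫_τ(λ)` such that every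
`b ∈ 𝒫_ρ(λ)` is the union of fewer than `σ` members of `Z`; `2 ^ λ` if no such `Z` exists. -/
noncomputable def equalLtCov (lam tau rho sigma : Cardinal.{u}) : Cardinal.{u} :=
  if ∃ Z, IsEqualLtFamily lam tau rho sigma Z then
    sInf {κ | ∃ Z, IsEqualLtFamily lam tau rho sigma Z ∧ #Z = κ}
  else 2 ^ lam

/-!
Let `A` be a family of at most `λ` sets, each of size less than `λ`. Ranking every member by the
larger of its index and its size, the members of rank below a given `w < λ` number at most `|w|` and
have size at most `|w|`, so their union has size less than `λ` and misses some point `p w`. Choose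
such points along a cofinal set of ranks of size `cf λ`. Fewer than `cf λ` members of `A` have ranks
bounded by one of these chosen ranks, say `w`, so they do not cover `p w`.
-/

section Diagonalization

open scoped Ordinal

variable {ι α β : Type u} [LinearOrder β] {A : ι → Set α}

theorem exists_mk_le_cof_forall_not_subset_biUnion {g : ι → β}
    (hg : ∀ w, ⋃ i ∈ g ⁻¹' Iio w, A i ≠ Set.univ) :
    ∃ b : Set α, #b ≤ Order.cof β ∧ ∀ t : Set ι, #t < Order.cof β → ¬ b ⊆ ⋃ i ∈ t, A i := by
  obtain ⟨S, hS, hScard⟩ := Order.exists_cof_eq β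
  choose p hp using fun w => (ne_univ_iff_exists_notMem _).1 (hg w)
  refine ⟨p '' S, mk_image_le.trans hScard.le, fun t ht hcover => ?_⟩
  have not_cofinal : ¬ IsCofinal (g '' t) := fun h =>
    ((Order.cof_le h).trans mk_image_le).not_gt ht
  obtain ⟨w, hw⟩ := not_isCofinal_iff.1 not_cofinal
  obtain ⟨s, hs, hws⟩ := hS w
  obtain ⟨i, hi, hpi⟩ := mem_iUnion₂.1 (hcover (mem_image_of_mem p hs))
  exact hp s (mem_biUnion ((hw _ (mem_image_of_mem g hi)).trans_le hws) hpi)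

variable [WellFoundedLT β]

theorem exists_mk_Iio_eq {c : Cardinal.{u}} (hβ : (#β).ord = typeLT β) (hc : c < #β) :
    ∃ w : β, #(Iio w) = c := by
  obtain ⟨w, hw⟩ := Ordinal.typein_surj (α := β) (· < ·) (hβ ▸ ord_lt_ord.2 hc)
  exact ⟨w, (congrArg Ordinal.card hw).trans (card_ord c)⟩

theorem exists_forall_mk_biUnion_Iio_lt (hβ : (#β).ord = typeLT β) (hinf : ℵ₀ ≤ #β)
    (hι : #ι ≤ #β) (hA : ∀ i, #(A i) < #β) :
    ∃ g : ι → β, ∀ w, #(⋃ i ∈ g ⁻¹' Iio w, A i) < #β := by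
  obtain ⟨f⟩ := (le_def ι β).1 hι
  choose h hh using fun i => exists_mk_Iio_eq hβ (hA i)
  refine ⟨fun i => max (f i) (h i), fun w => ?_⟩
  set s : Set ι := (fun i => max (f i) (h i)) ⁻¹' Iio w
  have hw : #(Iio w) < #β := mk_Iio_lt w hβ
  have mk_s_le : #s ≤ #(Iio w) := by
    rw [← mk_image_eq (s := s) f.injective]
    exact mk_le_mk_of_subset (image_subset_iff.2 fun i hi => (le_max_left _ _).trans_lt hi)
  have mk_A_le : ∀ i : s, #(A i) ≤ #(Iio w) := fun i => by
    rw [← hh i]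
    exact mk_le_mk_of_subset (Iio_subset_Iio ((le_max_right _ _).trans (le_of_lt i.2)))
  calc #(⋃ i ∈ s, A i) ≤ #s * ⨆ i : s, #(A i) := mk_biUnion_le A s
    _ ≤ #(Iio w) * #(Iio w) := mul_le_mul' mk_s_le (ciSup_le' mk_A_le)
    _ < #β := mul_lt_of_lt hinf hw hw

end Diagonalization

theorem exists_mk_le_cof_ord_forall_not_subset_biUnion {ι α : Type u} {A : ι → Set α}
    (hinf : ℵ₀ ≤ #α) (hι : #ι ≤ #α) (hA : ∀ i, #(A i) < #α) :
    ∃ b : Set α, #b ≤ (#α).ord.cof ∧ ∀ t : Set ι, #t < (#α).ord.cof → ¬ b ⊆ ⋃ i ∈ t, A i := by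
  obtain ⟨g, hg⟩ : ∃ g : ι → (#α).ord.ToType, ∀ w, #(⋃ i ∈ g ⁻¹' Iio w, A i) < #α := by
    simpa only [mk_ord_toType] using exists_forall_mk_biUnion_Iio_lt
      (β := (#α).ord.ToType) (by simp) (by simpa) (by simpa) (by simpa)
  rw [← Ordinal.cof_toType]
  exact exists_mk_le_cof_forall_not_subset_biUnion fun w hw =>
    (hg w).ne (by rw [hw, mk_univ])

theorem IsCovFamily.lt_mk {lam ρ₂ ρ₃ σ : Cardinal.{u}} {X : Set (Set lam.out)}
    (hX : IsCovFamily lam ρ₂ ρ₃ σ X) (hinf : ℵ₀ ≤ lam) (hρ₂ : ρ₂ ≤ lam)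
    (hρ₃ : lam.ord.cof < ρ₃) (hσ : σ ≤ lam.ord.cof) : lam < #X := by
  by_contra! hle
  obtain ⟨hsmall, hcov⟩ := hX
  obtain ⟨b, hb, hbX⟩ : ∃ b : Set lam.out, #b ≤ lam.ord.cof ∧
      ∀ t : Set X, #t < lam.ord.cof → ¬ b ⊆ ⋃ x ∈ t, x.1 := by
    simpa only [mk_out] using exists_mk_le_cof_ord_forall_not_subset_biUnion
      (A := fun x : X => x.1) (by simpa) (by simpa)
      (fun x => by simpa using (hsmall x x.2).trans_le hρ₂)
  obtain ⟨Q, hQX, hQ, hbQ⟩ := hcov b (hb.trans_lt hρ₃)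
  refine hbX (Subtype.val ⁻¹' Q) ?_ fun a ha => ?_
  · exact (mk_preimage_of_injective _ Q Subtype.val_injective).trans_lt (hQ.trans_le hσ)
  · obtain ⟨q, hq, haq⟩ := hbQ ha
    exact mem_biUnion (x := (⟨q, hQX hq⟩ : X)) hq haq

theorem lt_cov_of_forall_isCovFamily {c ρ₁ ρ₂ ρ₃ ρ₄ : Cardinal.{u}} (hc : c < 2 ^ ρ₁)
    (h : ∀ X, IsCovFamily ρ₁ ρ₂ ρ₃ ρ₄ X → c < #X) : c < cov ρ₁ ρ₂ ρ₃ ρ₄ := by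
  unfold cov
  split_ifs with hex
  · obtain ⟨X₀, hX₀⟩ := hex
    obtain ⟨X, hX, hcard⟩ :=
      csInf_mem (s := {κ | ∃ X, IsCovFamily ρ₁ ρ₂ ρ₃ ρ₄ X ∧ #X = κ}) ⟨#X₀, X₀, hX₀, rfl⟩
    exact hcard ▸ h X hX
  · exact hc

theorem stmt0_general {lam ρ₂ ρ₃ σ : Cardinal.{u}} (hinf : ℵ₀ ≤ lam) (hρ₂ : ρ₂ ≤ lam)
    (hρ₃ : lam.ord.cof < ρ₃) (hσ : σ ≤ lam.ord.cof) : lam < cov lam ρ₂ ρ₃ σ :=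
  lt_cov_of_forall_isCovFamily (cantor lam) fun _ hX => hX.lt_mk hinf hρ₂ hρ₃ hσ

/-- Let `λ` be a singular cardinal. Then `(cf λ)⁺` is not a
`λ`-revision cardinal; that is, for every cardinal `σ < (cf λ)⁺` we have
`cov (λ, (cf λ)⁺, (cf λ)⁺, σ) > λ`. -/
theorem stmt0 (lam : Cardinal.{u}) (hinf : ℵ₀ ≤ lam) (hsing : lam.ord.cof < lam) :
    ¬ IsRevision (Order.succ lam.ord.cof) lam ∧
      ∀ σ : Cardinal.{u}, σ < Order.succ lam.ord.cof →
        lam < cov lam (Order.succ lam.ord.cof) (Order.succ lam.ord.cof) σ := by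
  have h (σ : Cardinal.{u}) (hσ : σ < Order.succ lam.ord.cof) := stmt0_general hinf
    (Order.succ_le_of_lt hsing) (Order.lt_succ lam.ord.cof) (Order.le_of_lt_succ hσ)
  exact ⟨fun ⟨σ, hσ, hle⟩ => (h σ hσ).not_ge hle, h⟩
end

section
/- Let χ ≤ λ be two uncountable cardinals and suppose that χ is a λ-revision cardinal. Then χ is a λ⁺-revision cardinal. -/
/-!
Since `λ⁺` is regular, every subset of `λ⁺` of size at most `λ` lies in a proper initial segment,
and each of the `λ⁺` many initial segments injects into `λ`. Pulling a covering family on `λ` back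
along these injections gives a covering family on `λ⁺` whose size is at most `λ⁺` times that of
the original family. The parameter `σ` is unchanged because each set to be covered is covered
inside a single initial segment.
-/

open Cardinal Set

universe u

section CoveringNumber

variable {ρ₁ ρ₂ ρ₃ ρ₄ : Cardinal.{u}}

lemma IsCovFamily.cov_le {X : Set (Set ρ₁.out)} (hX : IsCovFamily ρ₁ ρ₂ ρ₃ ρ₄ X) :
    cov ρ₁ ρ₂ ρ₃ ρ₄ ≤ #X := by
  rw [cov, if_pos ⟨X, hX⟩]
  exact csInf_le' ⟨X, hX, rfl⟩

lemma exists_isCovFamily_mk_eq_cov (h : ∃ X, IsCovFamily ρ₁ ρ₂ ρ₃ ρ₄ X) :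
    ∃ X, IsCovFamily ρ₁ ρ₂ ρ₃ ρ₄ X ∧ #X = cov ρ₁ ρ₂ ρ₃ ρ₄ := by
  rw [cov, if_pos h]
  obtain ⟨X, hX⟩ := h
  exact csInf_mem (s := {κ | ∃ X, IsCovFamily ρ₁ ρ₂ ρ₃ ρ₄ X ∧ #X = κ}) ⟨#X, X, hX, rfl⟩

lemma exists_isCovFamily_of_cov_lt (h : cov ρ₁ ρ₂ ρ₃ ρ₄ < 2 ^ ρ₁) :
    ∃ X, IsCovFamily ρ₁ ρ₂ ρ₃ ρ₄ X := by
  by_contra hX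
  exact h.ne (if_neg hX)

end CoveringNumber

section Pullback

variable {ι α β : Type u}

/-- The pullbacks of the members of a family `X` of subsets of `β` along the partial maps
`f i : s i → β`, for all `i`. It transfers covering families from `β` to `α`. The partial maps are
encoded as total functions `f i`, of which only the restriction to `s i` matters. -/
def pullbackFamily (s : ι → Set α) (f : ι → α → β) (X : Set (Set β)) : Set (Set α) :=
  range fun p : ι × X ↦ s p.1 ∩ f p.1 ⁻¹' p.2

lemma mk_pullbackFamily_le (s : ι → Set α) (f : ι → α → β) (X : Set (Set β)) :
    #(pullbackFamily s f X) ≤ #ι * #X :=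
  mk_range_le.trans_eq (mul_def ι X).symm

lemma mk_inter_preimage_le_of_injOn {t : Set α} {g : α → β} (hg : InjOn g t) (x : Set β) :
    #(t ∩ g ⁻¹' x : Set α) ≤ #x := by
  rw [← mk_image_eq_of_injOn g _ (hg.mono inter_subset_left)]
  exact mk_le_mk_of_subset (image_subset_iff.mpr inter_subset_right)

lemma IsCovFamily.pullbackFamily {κ μ ρ₂ ρ₃ ρ₄ : Cardinal.{u}} {s : ι → Set κ.out}
    {f : ι → κ.out → μ.out} {X : Set (Set μ.out)} (hX : IsCovFamily μ ρ₂ ρ₃ ρ₄ X)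
    (hf : ∀ i, InjOn (f i) (s i)) (hs : ∀ b : Set κ.out, #b < ρ₃ → ∃ i, b ⊆ s i) :
    IsCovFamily κ ρ₂ ρ₃ ρ₄ (pullbackFamily s f X) := by
  constructor
  · rintro _ ⟨⟨i, x, hx⟩, rfl⟩
    exact (mk_inter_preimage_le_of_injOn (hf i) x).trans_lt (hX.1 x hx)
  · intro b hb
    obtain ⟨i, hbi⟩ := hs b hb
    obtain ⟨Q, hQX, hQ, hbQ⟩ := hX.2 (f i '' b) (mk_image_le.trans_lt hb)
    refine ⟨(fun x ↦ s i ∩ f i ⁻¹' x) '' Q, ?_, mk_image_le.trans_lt hQ, fun a ha ↦ ?_⟩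
    · rintro _ ⟨x, hx, rfl⟩
      exact ⟨(i, ⟨x, hQX hx⟩), rfl⟩
    · obtain ⟨x, hx, hax⟩ := hbQ (mem_image_of_mem (f i) ha)
      exact ⟨s i ∩ f i ⁻¹' x, mem_image_of_mem _ hx, hbi ha, hax⟩

end Pullback

lemma exists_cover_of_mk_lt_cof (α : Type u) :
    ∃ s : α → Set α, (∀ a, #(s a) < #α) ∧ ∀ b : Set α, #b < (#α).ord.cof → ∃ a, b ⊆ s a := by
  obtain ⟨_, _, hα⟩ := exists_ord_eq_type_lt α
  refine ⟨Iio, fun a ↦ mk_Iio_lt a hα, fun b hb ↦ ?_⟩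
  have hb' : ¬ IsCofinal b := fun h ↦ by
    rw [hα, Ordinal.cof_type] at hb
    exact (Order.cof_le h).not_gt hb
  exact not_isCofinal_iff.mp hb'

lemma exists_injOn_of_mk_le {α β : Type u} [Nonempty β] {s : Set α} (h : #s ≤ #β) :
    ∃ f : α → β, InjOn f s := by
  obtain ⟨g⟩ := h
  exact exists_injOn_iff_injective.mpr ⟨g, g.injective⟩

theorem stmt2_general {lam ρ τ σ : Cardinal.{u}} (hlam : ℵ₀ ≤ lam) (hτ : τ ≤ Order.succ lam)
    (hfam : ∃ X, IsCovFamily lam ρ τ σ X) :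
    cov (Order.succ lam) ρ τ σ ≤ max (Order.succ lam) (cov lam ρ τ σ) := by
  obtain ⟨X, hX, hXcard⟩ := exists_isCovFamily_mk_eq_cov hfam
  obtain ⟨s, hs_card, hs⟩ := exists_cover_of_mk_lt_cof (Order.succ lam).out
  rw [mk_out, (isRegular_succ hlam).cof_ord] at hs
  have : Nonempty lam.out := by
    rw [← mk_ne_zero_iff, mk_out]
    exact (aleph0_pos.trans_le hlam).ne'
  have hs_le (i) : #(s i) ≤ #lam.out := by
    simpa only [mk_out, Order.lt_succ_iff] using hs_card i
  choose f hf using fun i ↦ exists_injOn_of_mk_le (hs_le i)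
  calc
    cov (Order.succ lam) ρ τ σ ≤ #(pullbackFamily s f X) :=
      (hX.pullbackFamily hf fun b hb ↦ hs b (hb.trans_le hτ)).cov_le
    _ ≤ Order.succ lam * cov lam ρ τ σ := by
      simpa only [mk_out, hXcard] using mk_pullbackFamily_le s f X
    _ ≤ max (Order.succ lam) (cov lam ρ τ σ) :=
      mul_le_max_of_aleph0_le_left (hlam.trans (Order.le_succ lam))

/-- Let `χ ≤ λ` be two uncountable cardinals and suppose that `χ` is a
`λ`-revision cardinal. Then `χ` is a `λ⁺`-revision cardinal. -/
theorem stmt2 (χ lam : Cardinal.{u}) (hχ : ℵ₀ < χ) (hlam : ℵ₀ < lam) (hχlam : χ ≤ lam)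
    (h : IsRevision χ lam) : IsRevision χ (Order.succ lam) := by
  obtain ⟨σ, hσ, hcov⟩ := h
  have hfam := exists_isCovFamily_of_cov_lt (hcov.trans_lt (cantor lam))
  exact ⟨σ, hσ, (stmt2_general hlam.le (hχlam.trans (Order.le_succ lam)) hfam).trans
    (max_le le_rfl (hcov.trans (Order.le_succ lam)))⟩
end

section
/- Let χ be an uncountable cardinal, and let τ equal χ if χ is a limit cardinal, and the cardinal predecessor of χ otherwise. Then χ is a λ-revision cardinal for every cardinal λ with χ ≤ λ < χ^{+cf(τ)}; equivalently, for every ordinal β < cf(τ), χ is a λ-revision cardinal where λ is the β-th successor cardinal of χ. -/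
/-!
Write `χ = ℵ_α`, `lam = ℵ_(α+β)`. A set of infinite size `κ` is an increasing union, along `κ`, of
sets of size `< κ`. If `cf κ ≥ χ`, every subset of size `< χ` lies in one piece; if `cf κ < σ` with
`σ` regular, the set is the union of fewer than `σ` pieces and any cover by fewer than `σ` sets of
each piece assembles to one of the whole. So `cov (lam, χ, χ, σ) ≤ lam` follows by induction as soon
as every `κ ∈ [χ, lam]` is of one of these two kinds. Regular `κ ≥ χ` is of the first kind, and a
singular `ℵ_(α+δ)` with `0 < δ ≤ β` has cofinality `cf δ ≤ |β|`. It remains to find a regular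
`σ < χ` above `|β|`, and above `cf χ` when `χ` is singular; this is possible whenever `|β| < τ`.
-/

open Cardinal Set

universe u

/-- The inequality `cov (s, ρ₂, ρ₃, ρ₄) ≤ μ` for a set `s` in place of the cardinal `ρ₁`. The
members of the covering family need not be subsets of `s`. -/
def CovLE {T : Type u} (s : Set T) (ρ₂ ρ₃ ρ₄ μ : Cardinal.{u}) : Prop :=
  ∃ X : Set (Set T), #X ≤ μ ∧ (∀ x ∈ X, #x < ρ₂) ∧
    ∀ b ⊆ s, #b < ρ₃ → ∃ Q ⊆ X, #Q < ρ₄ ∧ b ⊆ ⋃₀ Q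

lemma cov_le_of_covLE_univ {ρ₁ ρ₂ ρ₃ ρ₄ μ : Cardinal.{u}}
    (h : CovLE (univ : Set ρ₁.out) ρ₂ ρ₃ ρ₄ μ) : cov ρ₁ ρ₂ ρ₃ ρ₄ ≤ μ := by
  obtain ⟨X, hXμ, hXρ₂, hX⟩ := h
  have hfam : IsCovFamily ρ₁ ρ₂ ρ₃ ρ₄ X := ⟨hXρ₂, fun b => hX b (subset_univ b)⟩
  rw [cov, if_pos ⟨X, hfam⟩]
  calc sInf {κ | ∃ Y, IsCovFamily ρ₁ ρ₂ ρ₃ ρ₄ Y ∧ #Y = κ} ≤ #X := csInf_le' ⟨X, hfam, rfl⟩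
    _ ≤ μ := hXμ

lemma exists_subset_of_monotone_of_mk_lt_cof {T ι : Type u} [LinearOrder ι] {A : ι → Set T}
    (hA : Monotone A) {b : Set T} (hb : b ⊆ ⋃ i, A i) (hcof : #b < Order.cof ι) :
    ∃ i, b ⊆ A i := by
  choose f hf using fun x : b => mem_iUnion.1 (hb x.2)
  have hrange : ¬ IsCofinal (range f) := fun h =>
    ((Order.cof_le h).trans mk_range_le).not_gt hcof
  obtain ⟨i, hi⟩ := not_isCofinal_iff.1 hrange
  exact ⟨i, fun x hx => hA (hi _ (mem_range_self ⟨x, hx⟩)).le (hf ⟨x, hx⟩)⟩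

lemma iUnion_subset_biUnion_of_isCofinal {T ι : Type*} [Preorder ι] {A : ι → Set T}
    (hA : Monotone A) {D : Set ι} (hD : IsCofinal D) : ⋃ i, A i ⊆ ⋃ i ∈ D, A i := by
  refine iUnion_subset fun i => ?_
  obtain ⟨j, hjD, hij⟩ := hD i
  exact (hA hij).trans (subset_biUnion_of_mem hjD)

lemma exists_monotone_iUnion_eq {T : Type u} {κ : Cardinal.{u}} (hκ : ℵ₀ ≤ κ) {s : Set T}
    (hs : #s ≤ κ) :
    ∃ A : κ.ord.ToType → Set T, Monotone A ∧ (∀ i, #(A i) < κ) ∧ ⋃ i, A i = s := by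
  obtain ⟨f⟩ : #s ≤ #κ.ord.ToType := by rwa [mk_ord_toType]
  have := noMaxOrder hκ
  refine ⟨fun i => Subtype.val '' (f ⁻¹' Iio i),
    fun i j hij => image_mono (preimage_mono (Iio_subset_Iio hij)), fun i => ?_, ?_⟩
  · calc #(Subtype.val '' (f ⁻¹' Iio i)) ≤ #(f ⁻¹' Iio i) := mk_image_le
      _ ≤ #(Iio i) := mk_preimage_of_injective _ _ f.injective
      _ < κ := by simpa using mk_Iio_lt i (by simp)
  · rw [← image_iUnion, ← preimage_iUnion, iUnion_Iio, preimage_univ, image_univ,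
      Subtype.range_coe]

namespace CovLE

variable {T ι : Type u} {s : Set T} {χ ρ σ κ μ ν : Cardinal.{u}}

lemma mono (h : CovLE s χ ρ σ μ) (hμν : μ ≤ ν) : CovLE s χ ρ σ ν :=
  let ⟨X, hXμ, hX⟩ := h
  ⟨X, hXμ.trans hμν, hX⟩

lemma of_mk_lt (hs : #s < χ) (hσ : 1 < σ) : CovLE s χ ρ σ 1 :=
  ⟨{s}, by simp, by simpa using hs, fun b hb _ => ⟨{s}, subset_rfl, by simpa using hσ, by simpa⟩⟩

lemma of_forall_subset_biUnion {A : ι → Set T} (hσ : σ.IsRegular) (hμ : ℵ₀ ≤ μ) (hι : #ι ≤ μ)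
    (hA : ∀ i, CovLE (A i) χ ρ σ μ)
    (hs : ∀ b ⊆ s, #b < ρ → ∃ D : Set ι, #D < σ ∧ b ⊆ ⋃ i ∈ D, A i) : CovLE s χ ρ σ μ := by
  choose X hXμ hXχ hX using hA
  refine ⟨⋃ i, X i, ?_, fun x hx => ?_, fun b hbs hbρ => ?_⟩
  · calc #(⋃ i, X i) ≤ #ι * ⨆ i, #(X i) := mk_iUnion_le X
      _ ≤ μ * μ := mul_le_mul' hι (ciSup_le' hXμ)
      _ = μ := mul_eq_self hμ
  · obtain ⟨i, hi⟩ := mem_iUnion.1 hx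
    exact hXχ i x hi
  · obtain ⟨D, hDσ, hbD⟩ := hs b hbs hbρ
    choose Q hQX hQσ hQ using fun i => hX i (b ∩ A i) inter_subset_right
      ((mk_le_mk_of_subset inter_subset_left).trans_lt hbρ)
    refine ⟨⋃ i ∈ D, Q i, iUnion₂_subset fun i _ => (hQX i).trans (subset_iUnion X i), ?_,
      fun x hx => ?_⟩
    · exact (card_biUnion_lt_iff_forall_of_isRegular hσ hDσ).2 fun i _ => hQσ i
    · obtain ⟨i, hiD, hxi⟩ := mem_iUnion₂.1 (hbD hx)
      exact sUnion_mono (subset_biUnion_of_mem hiD) (hQ i ⟨hx, hxi⟩)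

lemma of_forall_mk_lt (hσ : σ.IsRegular) (hκ : ℵ₀ ≤ κ)
    (hcof : ρ ≤ κ.ord.cof ∨ κ.ord.cof < σ) (hlt : ∀ t : Set T, #t < κ → CovLE t χ ρ σ κ)
    (hs : #s ≤ κ) : CovLE s χ ρ σ κ := by
  obtain ⟨A, hA, hAκ, rfl⟩ := exists_monotone_iUnion_eq hκ hs
  rw [← Ordinal.cof_toType] at hcof
  refine of_forall_subset_biUnion hσ hκ (mk_ord_toType κ).le (fun i => hlt _ (hAκ i))
    fun b hb hbρ => ?_
  rcases hcof with hρ | hσ'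
  · obtain ⟨i, hi⟩ := exists_subset_of_monotone_of_mk_lt_cof hA hb (hbρ.trans_le hρ)
    exact ⟨{i}, by simpa using hσ.nat_lt 1, by simpa using hi⟩
  · obtain ⟨D, hD, hDcof⟩ := Order.exists_cof_eq κ.ord.ToType
    exact ⟨D, hDcof.trans_lt hσ', hb.trans (iUnion_subset_biUnion_of_isCofinal hA hD)⟩

lemma of_forall_le_cof_or_cof_lt (hχ : ℵ₀ ≤ χ) (hσ : σ.IsRegular)
    (hcof : ∀ κ, χ ≤ κ → κ ≤ #s → ρ ≤ κ.ord.cof ∨ κ.ord.cof < σ) :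
    CovLE s χ ρ σ (max χ #s) := by
  induction hκ : #s using WellFoundedLT.induction generalizing s with
  | ind κ ih =>
  subst hκ
  rcases lt_or_ge #s χ with hs | hs
  · exact (of_mk_lt hs (by simpa using hσ.nat_lt 1)).mono
      (one_le_aleph0.trans (hχ.trans (le_max_left _ _)))
  · rw [max_eq_right hs]
    refine of_forall_mk_lt hσ (hχ.trans hs) (hcof _ hs le_rfl) (fun t ht => ?_) le_rfl
    exact (ih _ ht (fun κ h₁ h₂ => hcof κ h₁ (h₂.trans ht.le)) rfl).mono (max_le hs ht.le)

end CovLE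

lemma cov_le_of_forall_le_cof_or_cof_lt {lam χ ρ σ : Cardinal.{u}} (hχ : ℵ₀ ≤ χ) (hχlam : χ ≤ lam)
    (hσ : σ.IsRegular) (hcof : ∀ κ, χ ≤ κ → κ ≤ lam → ρ ≤ κ.ord.cof ∨ κ.ord.cof < σ) :
    cov lam χ ρ σ ≤ lam := by
  have hmk : #(univ : Set lam.out) = lam := by simp
  refine cov_le_of_covLE_univ ?_
  simpa only [hmk, max_eq_right hχlam] using
    CovLE.of_forall_le_cof_or_cof_lt (s := (univ : Set lam.out)) hχ hσ (by rwa [hmk])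

lemma cof_aleph_add_le_card {α δ : Ordinal.{u}} (h : (ℵ_ (α + δ)).IsSingular) (hδ : δ ≠ 0) :
    (ℵ_ (α + δ)).ord.cof ≤ δ.card := by
  rw [ord_aleph, Ordinal.cof_omega h.isSuccLimit_of_aleph, Ordinal.cof_add α hδ]
  exact Ordinal.cof_le_card δ

lemma isRegular_or_cof_lt_of_le_aleph_add {κ σ : Cardinal.{u}} {α β : Ordinal.{u}}
    (hα : (ℵ_ α).IsRegular ∨ (ℵ_ α).ord.cof < σ) (hβ : β.card < σ) (hακ : ℵ_ α ≤ κ)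
    (hκβ : κ ≤ ℵ_ (α + β)) : κ.IsRegular ∨ κ.ord.cof < σ := by
  obtain ⟨γ, rfl⟩ := mem_range_aleph_iff.2 ((aleph0_le_aleph α).trans hακ)
  obtain ⟨δ, rfl⟩ := exists_add_of_le (aleph_le_aleph.1 hακ)
  have hδβ : δ ≤ β := by simpa using hκβ
  rcases eq_or_ne δ 0 with rfl | hδ
  · simpa using hα
  · refine (isRegular_or_isSingular (aleph0_le_aleph _)).imp_right fun hsing => ?_
    exact (cof_aleph_add_le_card hsing hδ).trans_lt ((Ordinal.card_le_card hδβ).trans_lt hβ)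

lemma cov_aleph_add_le {σ : Cardinal.{u}} {α β : Ordinal.{u}} (hσ : σ.IsRegular)
    (hα : (ℵ_ α).IsRegular ∨ (ℵ_ α).ord.cof < σ) (hβ : β.card < σ) :
    cov (ℵ_ (α + β)) (ℵ_ α) (ℵ_ α) σ ≤ ℵ_ (α + β) := by
  refine cov_le_of_forall_le_cof_or_cof_lt (aleph0_le_aleph α) (aleph_le_aleph.2 le_self_add) hσ
    fun κ hακ hκβ => ?_
  exact (isRegular_or_cof_lt_of_le_aleph_add hα hβ hακ hκβ).imp_left
    fun hκ => hακ.trans_eq hκ.cof_ord.symm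

lemma exists_isRegular_lt_of_isSuccLimit {c χ : Cardinal.{u}} (hχ : Order.IsSuccLimit χ)
    (hχ₀ : ℵ₀ < χ) (hc : c < χ) : ∃ σ < χ, σ.IsRegular ∧ c < σ :=
  ⟨Order.succ (max c ℵ₀), hχ.succ_lt (max_lt hc hχ₀), isRegular_succ (le_max_right c ℵ₀),
    Order.lt_succ_of_le (le_max_left c ℵ₀)⟩

lemma exists_isRegular_le {c τ : Cardinal.{u}} (hτ : ℵ₀ ≤ τ) (hc : c < τ) :
    ∃ σ ≤ τ, σ.IsRegular ∧ c < σ := by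
  rcases isRegular_or_isSingular hτ with hreg | hsing
  · exact ⟨τ, le_rfl, hreg, hc⟩
  · have hτ₀ : ℵ₀ < τ := hτ.lt_of_ne fun h => not_isSingular_aleph0 (h ▸ hsing)
    obtain ⟨σ, hστ, hσ⟩ := exists_isRegular_lt_of_isSuccLimit hsing.isSuccLimit hτ₀ hc
    exact ⟨σ, hστ.le, hσ⟩

lemma exists_isRegular_lt_of_isLimitCard {c χ : Cardinal.{u}} (hχ : IsLimitCard χ)
    (hχ₀ : ℵ₀ < χ) (hc : c < χ) :
    ∃ σ < χ, σ.IsRegular ∧ c < σ ∧ (χ.IsRegular ∨ χ.ord.cof < σ) := by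
  have hlim : Order.IsSuccLimit χ := Cardinal.isSuccLimit_iff.2
    ⟨(aleph0_pos.trans hχ₀).ne', Order.isSuccPrelimit_of_succ_ne fun μ => (hχ.2 μ).symm⟩
  rcases isRegular_or_isSingular hχ.1 with hreg | hsing
  · obtain ⟨σ, hσχ, hσ, hcσ⟩ := exists_isRegular_lt_of_isSuccLimit hlim hχ₀ hc
    exact ⟨σ, hσχ, hσ, hcσ, .inl hreg⟩
  · obtain ⟨σ, hσχ, hσ, hcσ⟩ :=
      exists_isRegular_lt_of_isSuccLimit hlim hχ₀ (max_lt hc hsing.cof_ord_lt)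
    exact ⟨σ, hσχ, hσ, (le_max_left _ _).trans_lt hcσ, .inr ((le_max_right _ _).trans_lt hcσ)⟩

theorem stmt4_general {χ τ : Cardinal.{u}} (hχ : ℵ₀ < χ)
    (hτ : χ = Order.succ τ ∨ (IsLimitCard χ ∧ τ = χ)) {α β : Ordinal.{u}}
    (hα : χ = ℵ_ α) (hβ : β < τ.ord) : IsRevision χ (ℵ_ (α + β)) := by
  rw [lt_ord] at hβ
  obtain ⟨σ, hσχ, hσ, hβσ, hχσ⟩ :
      ∃ σ < χ, σ.IsRegular ∧ β.card < σ ∧ (χ.IsRegular ∨ χ.ord.cof < σ) := by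
    rcases hτ with rfl | ⟨hlim, rfl⟩
    · have hτ₀ : ℵ₀ ≤ τ := Order.lt_succ_iff.1 hχ
      obtain ⟨σ, hστ, hσ, hβσ⟩ := exists_isRegular_le hτ₀ hβ
      exact ⟨σ, Order.lt_succ_of_le hστ, hσ, hβσ, .inl (isRegular_succ hτ₀)⟩
    · exact exists_isRegular_lt_of_isLimitCard hlim hχ hβ
  subst hα
  exact ⟨σ, hσχ, cov_aleph_add_le hσ hχσ hβσ⟩

/-- Let `χ` be an uncountable cardinal, and let `τ` equal `χ` if `χ`
is a limit cardinal, and the predecessor of `χ` otherwise. Then `χ` is a `λ`-revision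
cardinal for every cardinal `λ` with `χ ≤ λ < χ^{+cf τ}`; that is, writing `χ = ℵ_α`,
for every ordinal `β < cf τ`, `χ` is an `ℵ_{α+β}`-revision cardinal (`ℵ_{α+β}` being
the `β`-th successor cardinal of `χ`). -/
theorem stmt4 (χ τ : Cardinal.{u}) (hχ : ℵ₀ < χ)
    (hτ : χ = Order.succ τ ∨ (IsLimitCard χ ∧ τ = χ)) :
    ∀ α : Ordinal.{u}, χ = Cardinal.aleph α →
      ∀ β : Ordinal.{u}, β < (τ.ord.cof).ord →
        IsRevision χ (Cardinal.aleph (α + β)) := by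
  intro α hα β hβ
  exact stmt4_general hχ hτ hα (hβ.trans_le (Ordinal.ord_cof_le τ.ord))
end

section
/- Let χ and λ be cardinals with cf(χ) < χ < λ (so χ is singular). Then χ is a λ-revision cardinal if and only if χ⁺ is a λ-revision cardinal. -/
/-!
A set of size at most a singular cardinal `χ` is a union of `cf χ` sets of size less than `χ`.

From `χ` to `χ⁺`, the same family works: cut a set of size at most `χ` into `cf χ` small pieces and
cover each piece by fewer than `σ` members; this uses fewer than `χ` members in total.

From `χ⁺` to `χ`, let `Y` cover every set of size at most `χ` by fewer than `χ` of its members.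
The number of members needed is bounded by a single `σ < χ`: otherwise, for each of `cf χ` cardinals
cofinal in `χ`, some set of size at most `χ` needs at least that many members, and the union of
these bad sets, still of size at most `χ`, cannot be covered by fewer than `χ` members.
Cutting every member of `Y` into `cf χ` small pieces then gives the required family.
-/

open Cardinal Set

universe u

theorem mk_iUnion_le_mul {α ι : Type u} {f : ι → Set α} {c : Cardinal.{u}}
    (h : ∀ i, #(f i) ≤ c) : #(⋃ i, f i) ≤ #ι * c :=
  (mk_iUnion_le f).trans (mul_le_mul_right (ciSup_le' h) _)

theorem exists_isCofinal_range (α : Type u) [Preorder α] :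
    ∃ g : (Order.cof α).out → α, IsCofinal (range g) := by
  obtain ⟨s, hs, hcard⟩ := Order.exists_cof_eq α
  obtain ⟨e⟩ := Cardinal.eq.1 ((mk_out _).trans hcard.symm)
  refine ⟨Subtype.val ∘ e, ?_⟩
  rwa [e.surjective.range_comp Subtype.val, Subtype.range_coe]

theorem exists_cofinal_cardinals (χ : Cardinal.{u}) :
    ∃ c : χ.ord.cof.out → Cardinal.{u}, (∀ i, c i < χ) ∧ ∀ τ < χ, ∃ i, τ ≤ c i := by
  rw [← Ordinal.cof_toType]
  obtain ⟨g, hg⟩ := exists_isCofinal_range χ.ord.ToType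
  refine ⟨fun i ↦ (Ordinal.ToType.toOrd (g i) : Ordinal).card,
    fun i ↦ lt_ord.1 (Ordinal.ToType.toOrd (g i)).2, fun τ hτ ↦ ?_⟩
  obtain ⟨_, ⟨i, rfl⟩, hle⟩ := hg (Ordinal.ToType.mk ⟨τ.ord, ord_lt_ord.2 hτ⟩)
  exact ⟨i, ord_le.1 ((OrderIso.le_symm_apply _).2 hle)⟩

theorem exists_iUnion_eq_of_mk_le {χ : Cardinal.{u}} (hχ : ℵ₀ ≤ χ) {α : Type u} {b : Set α}
    (hb : #b ≤ χ) :
    ∃ f : χ.ord.cof.out → Set α, (∀ i, #(f i) < χ) ∧ ⋃ i, f i = b := by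
  rw [← Ordinal.cof_toType]
  obtain ⟨g, hg⟩ := exists_isCofinal_range χ.ord.ToType
  rw [← mk_ord_toType χ] at hb
  obtain ⟨e⟩ := hb
  refine ⟨fun i ↦ Subtype.val '' (e ⁻¹' Iic (g i)), fun i ↦ ?_, ?_⟩
  · have hIic : #(Iic (g i)) < χ := by
      simpa using mk_Iic_lt (g i) (by simp) (by simpa using hχ)
    exact (mk_image_le.trans (mk_preimage_of_injective _ _ e.injective)).trans_lt hIic
  · have hcover : ⋃ i, Iic (g i) = Set.univ := by
      rw [← biUnion_range (f := g) (g := Iic)]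
      exact isCofinal_iff_iUnion_Iic_eq_univ.1 hg
    rw [← image_iUnion, ← preimage_iUnion, hcover, preimage_univ, image_univ, Subtype.range_coe]

/-- As `κ < 2 ^ ρ₁`, the value `2 ^ ρ₁` given to `cov` when no family exists is out of reach. -/
theorem cov_le_iff {ρ₁ ρ₂ ρ₃ ρ₄ κ : Cardinal.{u}} (hκ : κ < 2 ^ ρ₁) :
    cov ρ₁ ρ₂ ρ₃ ρ₄ ≤ κ ↔ ∃ X, IsCovFamily ρ₁ ρ₂ ρ₃ ρ₄ X ∧ #X ≤ κ := by
  unfold cov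
  constructor
  · intro h
    split_ifs at h with hex
    · obtain ⟨X₀, hX₀⟩ := hex
      obtain ⟨X, hX, hcard⟩ :=
        csInf_mem (s := {κ | ∃ X, IsCovFamily ρ₁ ρ₂ ρ₃ ρ₄ X ∧ #X = κ}) ⟨_, X₀, hX₀, rfl⟩
      exact ⟨X, hX, hcard.trans_le h⟩
    · exact absurd h hκ.not_ge
  · rintro ⟨X, hX, hcard⟩
    rw [if_pos ⟨X, hX⟩]
    have hmem : #X ∈ {κ | ∃ X, IsCovFamily ρ₁ ρ₂ ρ₃ ρ₄ X ∧ #X = κ} := ⟨X, hX, rfl⟩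
    exact (csInf_le' hmem).trans hcard

theorem isRevision_iff {χ lam : Cardinal.{u}} :
    IsRevision χ lam ↔ ∃ σ < χ, ∃ X, IsCovFamily lam χ χ σ X ∧ #X ≤ lam := by
  simp only [IsRevision, cov_le_iff (cantor lam)]

namespace IsCovFamily

variable {ρ₁ ρ₂ ρ₃ ρ₄ ρ₂' ρ₃' ρ₄' χ σ : Cardinal.{u}} {X : Set (Set ρ₁.out)}

theorem mono (hX : IsCovFamily ρ₁ ρ₂ ρ₃ ρ₄ X) (h₂ : ρ₂ ≤ ρ₂') (h₃ : ρ₃' ≤ ρ₃) (h₄ : ρ₄ ≤ ρ₄') :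
    IsCovFamily ρ₁ ρ₂' ρ₃' ρ₄' X := by
  refine ⟨fun x hx ↦ (hX.1 x hx).trans_le h₂, fun b hb ↦ ?_⟩
  obtain ⟨Q, hQX, hQ, hbQ⟩ := hX.2 b (hb.trans_le h₃)
  exact ⟨Q, hQX, hQ.trans_le h₄, hbQ⟩

theorem succ_of_isSingular (hX : IsCovFamily ρ₁ ρ₂ χ σ X) (hχ : χ.IsSingular) (hσ : σ < χ) :
    IsCovFamily ρ₁ ρ₂ (Order.succ χ) χ X := by
  refine ⟨hX.1, fun b hb ↦ ?_⟩
  obtain ⟨f, hf, rfl⟩ := exists_iUnion_eq_of_mk_le hχ.aleph0_le (Order.lt_succ_iff.1 hb)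
  choose Q hQX hQ hfQ using fun i ↦ hX.2 (f i) (hf i)
  refine ⟨⋃ i, Q i, iUnion_subset hQX, ?_,
    iUnion_subset fun i ↦ (hfQ i).trans (sUnion_subset_sUnion (subset_iUnion Q i))⟩
  calc #(⋃ i, Q i) ≤ #χ.ord.cof.out * σ := mk_iUnion_le_mul fun i ↦ (hQ i).le
    _ = χ.ord.cof * σ := by rw [mk_out]
    _ < χ := mul_lt_of_lt hχ.aleph0_le hχ.cof_ord_lt hσ

theorem exists_lt_of_isSingular (hX : IsCovFamily ρ₁ ρ₂ (Order.succ χ) χ X) (hχ : χ.IsSingular) :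
    ∃ σ < χ, IsCovFamily ρ₁ ρ₂ (Order.succ χ) σ X := by
  obtain ⟨c, hc, hcofinal⟩ := exists_cofinal_cardinals χ
  by_contra! hnone
  have hbad (i) : ∃ b : Set ρ₁.out, #b < Order.succ χ ∧ ∀ Q ⊆ X, #Q < c i → ¬b ⊆ ⋃₀ Q := by
    by_contra! hcov
    exact hnone (c i) (hc i) ⟨hX.1, hcov⟩
  choose b hb hbX using hbad
  have hunion : #(⋃ i, b i) ≤ χ := by
    calc #(⋃ i, b i) ≤ #χ.ord.cof.out * χ := mk_iUnion_le_mul fun i ↦ Order.lt_succ_iff.1 (hb i)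
      _ = χ.ord.cof * χ := by rw [mk_out]
      _ ≤ χ := mul_le_of_le hχ.aleph0_le hχ.cof_ord_lt.le le_rfl
  obtain ⟨Q, hQX, hQ, hbQ⟩ := hX.2 _ (Order.lt_succ_iff.2 hunion)
  obtain ⟨i, hi⟩ := hcofinal _ (hχ.isSuccLimit.succ_lt hQ)
  exact hbX i Q hQX (Order.succ_le_iff.1 hi) ((subset_iUnion b i).trans hbQ)

theorem exists_refinement (hX : IsCovFamily ρ₁ (Order.succ χ) ρ₃ σ X) (hχ : ℵ₀ ≤ χ) :
    ∃ Z, IsCovFamily ρ₁ χ ρ₃ (Order.succ (σ * χ.ord.cof)) Z ∧ #Z ≤ #X * χ.ord.cof := by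
  choose! f hf hfx using fun (x : Set ρ₁.out) (hx : #x ≤ χ) ↦ exists_iUnion_eq_of_mk_le hχ hx
  have hXχ : ∀ x ∈ X, #x ≤ χ := fun x hx ↦ Order.lt_succ_iff.1 (hX.1 x hx)
  have hcard (Q : Set (Set ρ₁.out)) : #(image2 f Q Set.univ) ≤ #Q * χ.ord.cof := by
    simpa only [mk_univ, mk_out] using mk_image2_le (f := f) (s := Q) (t := Set.univ)
  refine ⟨image2 f X Set.univ, ⟨?_, fun b hb ↦ ?_⟩, hcard X⟩
  · rintro _ ⟨x, hx, i, -, rfl⟩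
    exact hf x (hXχ x hx) i
  · obtain ⟨Q, hQX, hQ, hbQ⟩ := hX.2 b hb
    refine ⟨image2 f Q Set.univ, image2_subset_right hQX,
      Order.lt_succ_iff.2 ((hcard Q).trans (mul_le_mul_left hQ.le _)),
      hbQ.trans (sUnion_subset fun x hx ↦ ?_)⟩
    rw [← hfx x (hXχ x (hQX hx))]
    exact iUnion_subset fun i ↦ subset_sUnion_of_mem (mem_image2_of_mem hx (mem_univ i))

end IsCovFamily

/-- Let `χ < λ` be cardinals with `cf χ < χ` (so `χ` is singular).
Then `χ` is a `λ`-revision cardinal iff `χ⁺` is a `λ`-revision cardinal. -/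
theorem stmt7 (χ lam : Cardinal.{u}) (hχ : ℵ₀ ≤ χ) (hsing : χ.ord.cof < χ)
    (hχlam : χ < lam) :
    IsRevision χ lam ↔ IsRevision (Order.succ χ) lam := by
  have hs : χ.IsSingular := ⟨hχ, hsing.ne⟩
  rw [isRevision_iff, isRevision_iff]
  constructor
  · rintro ⟨σ, hσ, X, hX, hcard⟩
    exact ⟨χ, Order.lt_succ χ, X,
      (hX.succ_of_isSingular hs hσ).mono (Order.le_succ χ) le_rfl le_rfl, hcard⟩
  · rintro ⟨σ, hσ, Y, hY, hYcard⟩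
    obtain ⟨τ, hτ, hYτ⟩ :=
      (hY.mono le_rfl le_rfl (Order.lt_succ_iff.1 hσ)).exists_lt_of_isSingular hs
    obtain ⟨X, hX, hXcard⟩ := hYτ.exists_refinement hχ
    have hbound : Order.succ (τ * χ.ord.cof) < χ :=
      hs.isSuccLimit.succ_lt (mul_lt_of_lt hχ hτ hsing)
    exact ⟨_, hbound, X, hX.mono le_rfl (Order.le_succ χ) le_rfl,
      hXcard.trans (mul_le_of_le (hχ.trans hχlam.le) hYcard (hsing.trans hχlam).le)⟩
end

section
/- Let σ, χ, λ be infinite cardinals with σ < χ ≤ λ. Then equal(λ, χ⁺, χ, σ) ≤ equal(λ, χ, χ, σ) ≤ max{2^{<χ}, cov(λ, χ, χ⁺, σ)}. Moreover, if cf(χ) < σ then equal(λ, χ⁺, χ, σ) = equal(λ, χ, χ, σ). -/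
/-!
If `X` witnesses `cov (λ, χ, χ⁺, σ)`, then every `b` of size `χ` is contained in `⋃₀ Q` for a small
`Q ⊆ X`, hence equal to the union of the sets `b ∩ x`, `x ∈ Q`. So the subsets of the members of `X`
witness `equal (λ, χ, χ, σ)`, and there are at most `|X| * 2^{<χ}` of them.

If `cf χ < σ`, cut each member of a witness `Z` of `equal (λ, χ⁺, χ, σ)` into at most `cf χ` pieces
of size less than `χ`. The pieces witness `equal (λ, χ, χ, σ)`, and there are at most `|Z| * cf χ`
of them. This is at most `|Z|` because `χ ≤ |Z|`: if `f` enumerates a subset of `λ` in order type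
`χ`, then for each `i < χ` the tail `{f j : i ≤ j}` is a union of members of `Z`, so some member of
`Z` contains `f i` and lies in this tail, and such a member determines `i`.
-/

open Cardinal Set

universe u

section Families

variable {α : Type u}

lemma le_powerlt_self {a : Cardinal.{u}} (ha : 1 < a) (c : Cardinal.{u}) : c ≤ a ^< c := by
  by_contra! h
  exact (cantor' _ ha).not_ge (le_powerlt a h)

lemma mk_biUnion_powerset_le {X : Set (Set α)} {τ : Cardinal.{u}} (hX : ∀ x ∈ X, #x < τ) :
    #(⋃ x ∈ X, 𝒫 x) ≤ #X * 2 ^< τ := by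
  have hpow (x : X) : #(𝒫 x.1) ≤ 2 ^< τ := by
    rw [mk_powerset]
    exact le_powerlt 2 (hX x x.2)
  exact (mk_biUnion_le _ _).trans (mul_le_mul_right (ciSup_le' hpow) _)

lemma sUnion_image_inter_eq_left {b : Set α} {Q : Set (Set α)} (hb : b ⊆ ⋃₀ Q) :
    ⋃₀ ((b ∩ ·) '' Q) = b := by
  rw [sUnion_image, ← inter_iUnion₂, ← sUnion_eq_biUnion, inter_eq_left.2 hb]

lemma mk_Ici_toType_ord {χ : Cardinal.{u}} (hχ : ℵ₀ ≤ χ) (i : χ.ord.ToType) : #(Ici i) = χ := by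
  have hinf : Infinite χ.ord.ToType := by rwa [infinite_iff, mk_ord_toType]
  rw [← compl_Iio, mk_compl_of_infinite _ (mk_Iio_lt i (by simp)), mk_ord_toType]

lemma exists_sUnion_eq_mk_le_cof {χ : Cardinal.{u}} (hχ : ℵ₀ ≤ χ) {z : Set α} (hz : #z ≤ χ) :
    ∃ P : Set (Set α), (∀ p ∈ P, #p < χ) ∧ #P ≤ χ.ord.cof ∧ ⋃₀ P = z := by
  rw [← mk_ord_toType χ] at hz
  obtain ⟨g⟩ := hz
  obtain ⟨S, hS, hS_card⟩ := Order.exists_cof_eq χ.ord.ToType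
  refine ⟨(fun s => Subtype.val '' (g ⁻¹' Iic s)) '' S, ?_, ?_, ?_⟩
  · rintro _ ⟨s, _, rfl⟩
    calc #(Subtype.val '' (g ⁻¹' Iic s))
        ≤ #(g ⁻¹' Iic s) := mk_image_le
      _ ≤ #(Iic s) := mk_preimage_of_injective _ _ g.injective
      _ < #χ.ord.ToType := mk_Iic_lt s (by simp) (by simpa using hχ)
      _ = χ := mk_ord_toType χ
  · rw [← Ordinal.cof_toType, ← hS_card]
    exact mk_image_le
  · have hcover : ⋃ s ∈ S, Iic s = Set.univ := by
      simpa [eq_univ_iff_forall, IsCofinal] using hS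
    rw [sUnion_image, ← image_iUnion₂, ← preimage_iUnion₂, hcover, preimage_univ, image_univ,
      Subtype.range_coe]

lemma mk_le_of_forall_image_Ici_eq_sUnion {ι : Type u} [PartialOrder ι] {f : ι → α}
    (hf : f.Injective) {Z : Set (Set α)} (hZ : ∀ i, ∃ e ⊆ Z, f '' Ici i = ⋃₀ e) : #ι ≤ #Z := by
  have hmem (i : ι) : ∃ z : Z, f i ∈ z.1 ∧ z.1 ⊆ f '' Ici i := by
    obtain ⟨e, heZ, he⟩ := hZ i
    obtain ⟨z, hz, hiz⟩ : f i ∈ ⋃₀ e := he ▸ mem_image_of_mem f self_mem_Ici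
    exact ⟨⟨z, heZ hz⟩, hiz, he ▸ subset_sUnion_of_mem hz⟩
  choose z hz hz_sub using hmem
  have hle {i j : ι} (hij : z i = z j) : j ≤ i :=
    (hf.mem_set_image).1 (hz_sub j (hij ▸ hz i))
  exact mk_le_of_injective fun i j hij => le_antisymm (hle hij.symm) (hle hij)

end Families

section CoveringNumbers

variable {lam τ τ' ρ ρ' σ σ' κ : Cardinal.{u}}

lemma exists_mk_eq_cov_or_cov_eq (lam τ ρ σ : Cardinal.{u}) :
    (∃ X, IsCovFamily lam τ ρ σ X ∧ #X = cov lam τ ρ σ) ∨ cov lam τ ρ σ = 2 ^ lam := by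
  by_cases h : ∃ X, IsCovFamily lam τ ρ σ X
  · rw [cov, if_pos h]
    obtain ⟨X, hX⟩ := h
    exact .inl (csInf_mem (s := {κ | ∃ X, IsCovFamily lam τ ρ σ X ∧ #X = κ}) ⟨#X, X, hX, rfl⟩)
  · exact .inr (if_neg h)

lemma exists_mk_eq_equalCov_or_equalCov_eq (lam τ ρ σ : Cardinal.{u}) :
    (∃ Z, IsEqualFamily lam τ ρ σ Z ∧ #Z = equalCov lam τ ρ σ) ∨
      equalCov lam τ ρ σ = 2 ^ lam := by
  by_cases h : ∃ Z, IsEqualFamily lam τ ρ σ Z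
  · rw [equalCov, if_pos h]
    obtain ⟨Z, hZ⟩ := h
    exact .inl (csInf_mem (s := {κ | ∃ Z, IsEqualFamily lam τ ρ σ Z ∧ #Z = κ}) ⟨#Z, Z, hZ, rfl⟩)
  · exact .inr (if_neg h)

lemma IsEqualFamily.equalCov_le_mk {Z : Set (Set lam.out)} (hZ : IsEqualFamily lam τ ρ σ Z) :
    equalCov lam τ ρ σ ≤ #Z := by
  rw [equalCov, if_pos ⟨Z, hZ⟩]
  exact csInf_le' ⟨Z, hZ, rfl⟩

lemma equalCov_le_two_power (lam τ ρ σ : Cardinal.{u}) : equalCov lam τ ρ σ ≤ 2 ^ lam := by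
  rcases exists_mk_eq_equalCov_or_equalCov_eq lam τ ρ σ with ⟨Z, -, hZ⟩ | h
  · rw [← hZ]
    exact (mk_set_le Z).trans_eq (by rw [mk_set, mk_out])
  · exact h.le

lemma equalCov_le_equalCov_of_forall
    (h : ∀ Z, IsEqualFamily lam τ ρ σ Z → equalCov lam τ' ρ' σ' ≤ #Z) :
    equalCov lam τ' ρ' σ' ≤ equalCov lam τ ρ σ := by
  rcases exists_mk_eq_equalCov_or_equalCov_eq lam τ ρ σ with ⟨Z, hZ, hZ_card⟩ | h_eq
  · exact hZ_card ▸ h Z hZ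
  · exact h_eq ▸ equalCov_le_two_power _ _ _ _

lemma IsEqualFamily.mono_left {Z : Set (Set lam.out)} (hZ : IsEqualFamily lam τ ρ σ Z)
    (h : τ ≤ τ') : IsEqualFamily lam τ' ρ σ Z :=
  ⟨fun z hz => (hZ.1 z hz).trans_le h, hZ.2⟩

lemma equalCov_anti_left (h : τ ≤ τ') : equalCov lam τ' ρ σ ≤ equalCov lam τ ρ σ :=
  equalCov_le_equalCov_of_forall fun _ hZ => (hZ.mono_left h).equalCov_le_mk

lemma equalCov_eq_zero_of_lt (h : lam < ρ) : equalCov lam τ ρ σ = 0 := by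
  have hempty : IsEqualFamily lam τ ρ σ ∅ := by
    refine ⟨by simp, fun b hb => absurd (mk_set_le b) ?_⟩
    rwa [hb, mk_out, not_le]
  simpa using hempty.equalCov_le_mk

lemma IsCovFamily.isEqualFamily_biUnion_powerset {X : Set (Set lam.out)}
    (hX : IsCovFamily lam τ ρ' σ X) (hρ : ρ < ρ') :
    IsEqualFamily lam τ ρ σ (⋃ x ∈ X, 𝒫 x) := by
  refine ⟨fun z hz => ?_, fun b hb => ?_⟩
  · obtain ⟨x, hx, hzx⟩ := mem_iUnion₂.1 hz
    exact (mk_le_mk_of_subset hzx).trans_lt (hX.1 x hx)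
  · obtain ⟨Q, hQX, hQ, hbQ⟩ := hX.2 b (hb ▸ hρ)
    refine ⟨(b ∩ ·) '' Q, ?_, mk_image_le.trans_lt hQ, (sUnion_image_inter_eq_left hbQ).symm⟩
    rintro _ ⟨x, hx, rfl⟩
    exact mem_biUnion (hQX hx) inter_subset_right

lemma equalCov_le_max_cov (hτ : ℵ₀ ≤ τ) (hρ : ρ < ρ') :
    equalCov lam τ ρ σ ≤ max (2 ^< τ) (cov lam τ ρ' σ) := by
  rcases exists_mk_eq_cov_or_cov_eq lam τ ρ' σ with ⟨X, hX, hX_card⟩ | h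
  · have h_inf : ℵ₀ ≤ (2 : Cardinal.{u}) ^< τ := hτ.trans (le_powerlt_self one_lt_two τ)
    calc equalCov lam τ ρ σ
        ≤ #(⋃ x ∈ X, 𝒫 x) := (hX.isEqualFamily_biUnion_powerset hρ).equalCov_le_mk
      _ ≤ #X * 2 ^< τ := mk_biUnion_powerset_le hX.1
      _ ≤ max #X (2 ^< τ) := mul_le_max_of_aleph0_le_right h_inf
      _ = max (2 ^< τ) (cov lam τ ρ' σ) := by rw [hX_card, max_comm]
  · exact h ▸ (equalCov_le_two_power _ _ _ _).trans (le_max_right _ _)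

lemma IsEqualFamily.le_mk {Z : Set (Set lam.out)} (hZ : IsEqualFamily lam τ ρ σ Z)
    (hρ : ℵ₀ ≤ ρ) (hρlam : ρ ≤ lam) : ρ ≤ #Z := by
  obtain ⟨f⟩ : #ρ.ord.ToType ≤ #lam.out := by rwa [mk_ord_toType, mk_out]
  have htail (i : ρ.ord.ToType) : #(f '' Ici i) = ρ := by
    rw [mk_image_eq f.injective, mk_Ici_toType_ord hρ]
  rw [← mk_ord_toType ρ]
  refine mk_le_of_forall_image_Ici_eq_sUnion f.injective fun i => ?_
  obtain ⟨e, heZ, -, he⟩ := hZ.2 _ (htail i)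
  exact ⟨e, heZ, he⟩

lemma IsEqualFamily.exists_refinement {Z : Set (Set lam.out)} (hZ : IsEqualFamily lam τ ρ σ Z)
    (hσ : ℵ₀ ≤ σ) (hκσ : κ < σ)
    (hcut : ∀ z : Set lam.out, #z < τ →
      ∃ P : Set (Set lam.out), (∀ p ∈ P, #p < τ') ∧ #P ≤ κ ∧ ⋃₀ P = z) :
    ∃ Z', IsEqualFamily lam τ' ρ σ Z' ∧ #Z' ≤ #Z * κ := by
  choose! P hP_lt hP_card hP_sUnion using hcut
  have hcard {e : Set (Set lam.out)} (he : e ⊆ Z) : #(⋃ z ∈ e, P z) ≤ #e * κ :=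
    (mk_biUnion_le _ _).trans <|
      mul_le_mul_right (ciSup_le' fun z : e => hP_card z (hZ.1 z (he z.2))) _
  refine ⟨⋃ z ∈ Z, P z, ⟨fun p hp => ?_, fun b hb => ?_⟩, hcard subset_rfl⟩
  · obtain ⟨z, hz, hp⟩ := mem_iUnion₂.1 hp
    exact hP_lt z (hZ.1 z hz) p hp
  · obtain ⟨e, heZ, he, rfl⟩ := hZ.2 b hb
    refine ⟨⋃ z ∈ e, P z, biUnion_subset_biUnion_left heZ,
      (hcard heZ).trans_lt (mul_lt_of_lt hσ he hκσ), ?_⟩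
    simp only [sUnion_iUnion]
    rw [sUnion_eq_biUnion]
    exact iUnion₂_congr fun z hz => (hP_sUnion z (hZ.1 z (heZ hz))).symm

lemma equalCov_le_equalCov_of_forall_exists_sUnion_eq (hσ : ℵ₀ ≤ σ) (hρ : ℵ₀ ≤ ρ)
    (hκσ : κ < σ) (hκρ : κ ≤ ρ)
    (hcut : ∀ z : Set lam.out, #z < τ →
      ∃ P : Set (Set lam.out), (∀ p ∈ P, #p < τ') ∧ #P ≤ κ ∧ ⋃₀ P = z) :
    equalCov lam τ' ρ σ ≤ equalCov lam τ ρ σ := by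
  rcases lt_or_ge lam ρ with hlam | hlam
  · simp only [equalCov_eq_zero_of_lt hlam, le_refl]
  refine equalCov_le_equalCov_of_forall fun Z hZ => ?_
  have hρZ : ρ ≤ #Z := hZ.le_mk hρ hlam
  obtain ⟨Z', hZ', hZ'_card⟩ := hZ.exists_refinement hσ hκσ hcut
  calc equalCov lam τ' ρ σ
      ≤ #Z' := hZ'.equalCov_le_mk
    _ ≤ #Z * κ := hZ'_card
    _ ≤ #Z := mul_le_of_le (hρ.trans hρZ) le_rfl (hκρ.trans hρZ)

end CoveringNumbers

theorem stmt9_general {σ χ : Cardinal.{u}} (lam : Cardinal.{u}) (hσ : ℵ₀ ≤ σ) (hχ : ℵ₀ ≤ χ) :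
    (equalCov lam (Order.succ χ) χ σ ≤ equalCov lam χ χ σ ∧
      equalCov lam χ χ σ ≤ max ((2 : Cardinal.{u}) ^< χ) (cov lam χ (Order.succ χ) σ)) ∧
    (χ.ord.cof < σ → equalCov lam (Order.succ χ) χ σ = equalCov lam χ χ σ) := by
  have hle : equalCov lam (Order.succ χ) χ σ ≤ equalCov lam χ χ σ :=
    equalCov_anti_left (Order.le_succ χ)
  refine ⟨⟨hle, equalCov_le_max_cov hχ (Order.lt_succ χ)⟩, fun hcof => hle.antisymm ?_⟩
  exact equalCov_le_equalCov_of_forall_exists_sUnion_eq hσ hχ hcof (Ordinal.cof_ord_le χ)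
    fun z hz => exists_sUnion_eq_mk_le_cof hχ (Order.lt_succ_iff.1 hz)

/-- Let `σ < χ ≤ λ` be infinite cardinals.  Then
`equal (λ, χ⁺, χ, σ) ≤ equal (λ, χ, χ, σ) ≤ max (2^{<χ}) (cov (λ, χ, χ⁺, σ))`, and
moreover `equal (λ, χ⁺, χ, σ) = equal (λ, χ, χ, σ)` in case `cf χ < σ`. -/
theorem stmt9 (σ χ lam : Cardinal.{u}) (hσ : ℵ₀ ≤ σ) (hσχ : σ < χ) (hχlam : χ ≤ lam) :
    (equalCov lam (Order.succ χ) χ σ ≤ equalCov lam χ χ σ ∧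
      equalCov lam χ χ σ ≤ max ((2 : Cardinal.{u}) ^< χ) (cov lam χ (Order.succ χ) σ)) ∧
    (χ.ord.cof < σ → equalCov lam (Order.succ χ) χ σ = equalCov lam χ χ σ) :=
  stmt9_general lam hσ (hσ.trans hσχ.le)
end

section
/- Let σ, χ, λ be infinite cardinals with σ < χ ≤ λ. If equal(λ, ρ⁺, ρ, σ) ≤ λ for every cardinal ρ with σ ≤ ρ < χ, then equal(λ, χ, <χ, σ) ≤ λ. Furthermore, if 2^{<χ} ≤ λ, then the converse holds: equal(λ, χ, <χ, σ) ≤ λ implies equal(λ, ρ⁺, ρ, σ) ≤ λ for every cardinal ρ with σ ≤ ρ < χ. -/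
/-!
By Cantor's theorem, a bound `≤ λ` on either invariant says that some witnessing family has at
most `λ` members.

Given a family for each `ρ` with `σ ≤ ρ < χ`, take the union of those with `ρ ≤ λ` and add the
singletons. A subset of `λ` of size at least `σ` is handled by the family for its own size, a
smaller one is the union of its singletons. Since at most `λ` cardinals are `≤ λ`, the union still
has at most `λ` members.

Conversely, the members of a family whose union is `b` are subsets of `b`. So those members of a
family for `equal (λ, χ, <χ, σ)` that have size at most `ρ` form a family for
`equal (λ, ρ⁺, ρ, σ)`.
-/

open Cardinal Set

universe u

lemma ite_sInf_mk_le_iff {α : Type u} {P : Set α → Prop} [Decidable (∃ Z, P Z)]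
    {κ μ : Cardinal.{u}} (h : κ < μ) :
    (if ∃ Z, P Z then sInf {ν | ∃ Z, P Z ∧ #Z = ν} else μ) ≤ κ ↔ ∃ Z, P Z ∧ #Z ≤ κ := by
  constructor
  · intro hle
    split_ifs at hle with hP
    · obtain ⟨Z₀, hZ₀⟩ := hP
      obtain ⟨Z, hZ, hcard⟩ :=
        csInf_mem (s := {ν | ∃ Z, P Z ∧ #Z = ν}) ⟨#Z₀, Z₀, hZ₀, rfl⟩
      exact ⟨Z, hZ, hcard.trans_le hle⟩
    · exact absurd hle h.not_ge
  · rintro ⟨Z, hZ, hcard⟩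
    rw [if_pos ⟨Z, hZ⟩]
    have hinf : sInf {ν | ∃ Z, P Z ∧ #Z = ν} ≤ #Z := csInf_le' ⟨Z, hZ, rfl⟩
    exact hinf.trans hcard

lemma mk_Iic_cardinal_le (κ : Cardinal.{u}) : #(Iic κ) ≤ lift.{u + 1} (κ + 1) := by
  have hsub : ord '' Iic κ ⊆ Iio (κ.ord + 1) := by
    rintro _ ⟨ρ, hρ, rfl⟩
    exact Order.lt_add_one_iff.2 (ord_le_ord.2 hρ)
  calc #(Iic κ) = #(ord '' Iic κ) := (mk_image_eq ord_injective).symm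
    _ ≤ #(Iio (κ.ord + 1)) := mk_le_mk_of_subset hsub
    _ = lift.{u + 1} (κ + 1) := by
      rw [mk_Iio_ordinal, Ordinal.card_add, card_ord, Ordinal.card_one]

lemma mk_biUnion_le_of_subset_Iic {α : Type u} {κ : Cardinal.{u}} (hκ : ℵ₀ ≤ κ)
    {s : Set Cardinal.{u}} (hs : s ⊆ Iic κ) {A : Cardinal.{u} → Set α}
    (hA : ∀ ρ ∈ s, #(A ρ) ≤ κ) : #(⋃ ρ ∈ s, A ρ) ≤ κ := by
  have hcard : #s ≤ lift.{u + 1} κ := by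
    simpa only [add_one_eq hκ] using (mk_le_mk_of_subset hs).trans (mk_Iic_cardinal_le κ)
  rw [← lift_le.{u + 1}]
  calc lift.{u + 1} #(⋃ ρ ∈ s, A ρ)
      ≤ lift.{u} #s * ⨆ ρ : s, lift.{u + 1} #(A ρ) := mk_biUnion_le_lift A s
    _ ≤ lift.{u + 1} κ * lift.{u + 1} κ :=
      mul_le_mul' (by rwa [lift_id'.{u, u + 1}]) (ciSup_le' fun ρ ↦ lift_le.2 (hA ρ ρ.2))
    _ = lift.{u + 1} κ := mul_eq_self (aleph0_le_lift.2 hκ)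

section Families

variable {lam τ ρ σ χ : Cardinal.{u}}

lemma equalCov_le_iff :
    equalCov lam τ ρ σ ≤ lam ↔ ∃ Z, IsEqualFamily lam τ ρ σ Z ∧ #Z ≤ lam := by
  classical exact ite_sInf_mk_le_iff (cantor lam)

lemma equalLtCov_le_iff :
    equalLtCov lam τ ρ σ ≤ lam ↔ ∃ Z, IsEqualLtFamily lam τ ρ σ Z ∧ #Z ≤ lam := by
  classical exact ite_sInf_mk_le_iff (cantor lam)

/-- The singletons of elements of `λ`, as far as they belong to `𝒫_τ(λ)`. They serve to write sets
with fewer than `σ` elements as unions of fewer than `σ` sets. The size bound matters only for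
`τ ≤ 1`, when it leaves none. -/
def smallSingletons (lam τ : Cardinal.{u}) : Set (Set lam.out) :=
  {z ∈ range singleton | #z < τ}

lemma mk_smallSingletons_le : #(smallSingletons lam τ) ≤ lam :=
  calc #(smallSingletons lam τ)
      ≤ #(range (singleton : lam.out → Set lam.out)) := mk_le_mk_of_subset (sep_subset _ _)
    _ ≤ #lam.out := mk_range_le
    _ = lam := mk_out lam

lemma image_singleton_subset_smallSingletons {b : Set lam.out} (hb : #b < τ) :
    singleton '' b ⊆ smallSingletons lam τ := by
  rintro _ ⟨x, hx, rfl⟩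
  exact ⟨mem_range_self x, (mk_le_mk_of_subset (singleton_subset_iff.2 hx)).trans_lt hb⟩

lemma isEqualLtFamily_biUnion_union_smallSingletons {Z : Cardinal.{u} → Set (Set lam.out)}
    (hZ : ∀ ρ ∈ Ico σ χ ∩ Iic lam, IsEqualFamily lam (Order.succ ρ) ρ σ (Z ρ)) :
    IsEqualLtFamily lam χ χ σ ((⋃ ρ ∈ Ico σ χ ∩ Iic lam, Z ρ) ∪ smallSingletons lam χ) := by
  refine ⟨?_, fun b hb ↦ ?_⟩
  · rintro z (hz | hz)
    · obtain ⟨ρ, hρ, hzρ⟩ := mem_iUnion₂.1 hz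
      exact (Order.lt_succ_iff.1 ((hZ ρ hρ).1 z hzρ)).trans_lt hρ.1.2
    · exact hz.2
  · rcases lt_or_ge #b σ with hbσ | hσb
    · exact ⟨singleton '' b,
        (image_singleton_subset_smallSingletons hb).trans subset_union_right,
        mk_image_le.trans_lt hbσ, by rw [sUnion_image, biUnion_of_singleton]⟩
    · have hmem : #b ∈ Ico σ χ ∩ Iic lam := ⟨⟨hσb, hb⟩, (mk_set_le b).trans_eq (mk_out lam)⟩
      obtain ⟨e, heZ, hcard, hbe⟩ := (hZ #b hmem).2 b rfl
      exact ⟨e, (heZ.trans (subset_biUnion_of_mem hmem)).trans subset_union_left, hcard, hbe⟩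

lemma IsEqualLtFamily.isEqualFamily_sep {Z : Set (Set lam.out)}
    (hZ : IsEqualLtFamily lam τ χ σ Z) (hρ : ρ < χ) :
    IsEqualFamily lam (Order.succ ρ) ρ σ {z ∈ Z | #z ≤ ρ} := by
  refine ⟨fun z hz ↦ Order.lt_succ_iff.2 hz.2, ?_⟩
  rintro b rfl
  obtain ⟨e, heZ, hcard, hbe⟩ := hZ.2 b hρ
  have hsub : ∀ z ∈ e, z ⊆ b := fun z hz ↦ hbe ▸ subset_sUnion_of_mem hz
  exact ⟨e, fun z hz ↦ ⟨heZ hz, mk_le_mk_of_subset (hsub z hz)⟩, hcard, hbe⟩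

lemma equalLtCov_le_of_forall_equalCov_le (hlam : ℵ₀ ≤ lam)
    (h : ∀ ρ ∈ Ico σ χ ∩ Iic lam, equalCov lam (Order.succ ρ) ρ σ ≤ lam) :
    equalLtCov lam χ χ σ ≤ lam := by
  choose! Z hZ hcard using fun ρ hρ ↦ equalCov_le_iff.1 (h ρ hρ)
  refine equalLtCov_le_iff.2 ⟨_, isEqualLtFamily_biUnion_union_smallSingletons hZ, ?_⟩
  exact (mk_union_le _ _).trans (add_le_of_le hlam
    (mk_biUnion_le_of_subset_Iic hlam inter_subset_right hcard) mk_smallSingletons_le)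

lemma equalCov_succ_le_of_equalLtCov_le (h : equalLtCov lam τ χ σ ≤ lam) (hρ : ρ < χ) :
    equalCov lam (Order.succ ρ) ρ σ ≤ lam := by
  obtain ⟨Z, hZ, hcard⟩ := equalLtCov_le_iff.1 h
  exact equalCov_le_iff.2
    ⟨_, hZ.isEqualFamily_sep hρ, (mk_le_mk_of_subset (sep_subset _ _)).trans hcard⟩

end Families

theorem stmt10_general (σ χ lam : Cardinal.{u}) (hlam : ℵ₀ ≤ lam) :
    equalLtCov lam χ χ σ ≤ lam ↔
      ∀ ρ : Cardinal.{u}, σ ≤ ρ → ρ < χ → equalCov lam (Order.succ ρ) ρ σ ≤ lam :=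
  ⟨fun h _ _ hρχ ↦ equalCov_succ_le_of_equalLtCov_le h hρχ,
    fun h ↦ equalLtCov_le_of_forall_equalCov_le hlam fun ρ hρ ↦ h ρ hρ.1.1 hρ.1.2⟩

/-- Let `σ < χ ≤ λ` be infinite cardinals. If
`equal (λ, ρ⁺, ρ, σ) ≤ λ` for every cardinal `ρ` with `σ ≤ ρ < χ`, then
`equal (λ, χ, <χ, σ) ≤ λ`.  Furthermore, if `2^{<χ} ≤ λ` then the converse holds. -/
theorem stmt10 (σ χ lam : Cardinal.{u}) (hσ : ℵ₀ ≤ σ) (hσχ : σ < χ) (hχlam : χ ≤ lam) :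
    ((∀ ρ : Cardinal.{u}, σ ≤ ρ → ρ < χ → equalCov lam (Order.succ ρ) ρ σ ≤ lam) →
      equalLtCov lam χ χ σ ≤ lam) ∧
    ((2 : Cardinal.{u}) ^< χ ≤ lam → equalLtCov lam χ χ σ ≤ lam →
      ∀ ρ : Cardinal.{u}, σ ≤ ρ → ρ < χ → equalCov lam (Order.succ ρ) ρ σ ≤ lam) := by
  have h := stmt10_general σ χ lam (hσ.trans (hσχ.le.trans hχlam))
  exact ⟨h.2, fun _ ↦ h.1⟩
end
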